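/- Let G be a group acting by isometries on a geodesic δ-hyperbolic metric space S. Then every pair of distinct points of the Gromov boundary ∂S satisfies condition (C1) for the induced action of G on ∂S. -/

import Mathlib

/-!
The exceptional set of group elements can be made empty, because cross ratios are invariant
under isometries.

Write `(a·b)` for Gromov products and suppose `a, a'` lie near `p`, `b, b'` lie near `q`, while
`ga, gb` lie near `x` and `ga', gb'` lie near `y`. For honest points of `S`,
`(a·a') + (b·b') - (a·b) - (a'·b') = (d(a,b) + d(a',b') - d(a,a') - d(b,b')) / 2`,
and the right side does not change when `g` is applied to all four points. If `A ∋ p` and `B ∋ q`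
are small balls, the left side is at least `2M - 2C` for `M` as large as desired and `C`
depending only on `p, q`. After applying `g` it is at most `2C'`, where `C'` depends only on
`x, y`, since the two subtracted products are nonnegative. Taking `M > C + C'` excludes every `g`.

To pass from boundary points to representing sequences, lower bounds on the boundary product
(an infimum) apply to all representatives (`eventually_gprod_gt`). Upper bounds hold a priori for
some representatives only, and carry over to all of them up to a constant
(`eventually_gprod_lt`), by the four-point inequality `four_point`, which is derived from slim
triangles. The bounds on boundary products come from the comparison of `ρ` with `d'`.
-/

/-- A geodesic segment from `u` to `v`: the image of an isometric embedding of
`[0, dist u v]` sending the endpoints to `u` and `v`. -/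
def IsGeodesicSegment {S : Type*} [MetricSpace S] (Γ : Set S) (u v : S) : Prop :=
  ∃ γ : ℝ → S, γ 0 = u ∧ γ (dist u v) = v ∧
    (∀ s ∈ Set.Icc (0 : ℝ) (dist u v), ∀ t ∈ Set.Icc (0 : ℝ) (dist u v),
      dist (γ s) (γ t) = |s - t|) ∧
    Γ = γ '' Set.Icc (0 : ℝ) (dist u v)

/-- A geodesic metric space: every pair of points is joined by a geodesic segment. -/
def GeodesicSpace (S : Type*) [MetricSpace S] : Prop :=
  ∀ u v : S, ∃ Γ : Set S, IsGeodesicSegment Γ u v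

/-- `δ`-hyperbolicity: every geodesic triangle is `δ`-slim. -/
def DeltaHyperbolic (S : Type*) [MetricSpace S] (δ : ℝ) : Prop :=
  ∀ x y z : S, ∀ Γ₁ Γ₂ Γ₃ : Set S,
    IsGeodesicSegment Γ₁ x y → IsGeodesicSegment Γ₂ y z → IsGeodesicSegment Γ₃ z x →
    ∀ p ∈ Γ₁, Metric.infDist p (Γ₂ ∪ Γ₃) ≤ δ

/-- A (left) action of a group `G` on a set `M`, given as a plain function. -/
def IsAction {G M : Type*} [Group G] (act : G → M → M) : Prop :=
  (∀ x : M, act 1 x = x) ∧ ∀ (g h : G) (x : M), act (g * h) x = act g (act h x)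

/-- An action by homeomorphisms on a topological space. -/
def IsActionByHomeos {G M : Type*} [Group G] [TopologicalSpace M] (act : G → M → M) : Prop :=
  IsAction act ∧ ∀ g : G, Continuous (act g)

/-- An action by isometries on a metric space. -/
def IsIsometricAction {G S : Type*} [Group G] [MetricSpace S] (act : G → S → S) : Prop :=
  IsAction act ∧ ∀ g : G, Isometry (act g)

theorem IsAction.injective {G M : Type*} [Group G] {act : G → M → M}
    (h : IsAction act) (g : G) : Function.Injective (act g) := by
  intro a b hab
  have h2 := congrArg (act g⁻¹) hab
  rw [← h.2 g⁻¹ g a, ← h.2 g⁻¹ g b, inv_mul_cancel, h.1, h.1] at h2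
  exact h2

/-- The Gromov product of `x` and `y` with respect to the basepoint `e`. -/
noncomputable def gprod {S : Type*} [MetricSpace S] (e x y : S) : ℝ :=
  (dist x e + dist y e - dist x y) / 2

/-- A sequence converges to infinity if its pairwise Gromov products tend to infinity. -/
def ConvToInfty {S : Type*} [MetricSpace S] (e : S) (s : ℕ → S) : Prop :=
  Filter.Tendsto (fun p : ℕ × ℕ => gprod e (s p.1) (s p.2)) Filter.atTop Filter.atTop

/-- The type of sequences in `S` converging to infinity. -/
def BSeq (S : Type*) [MetricSpace S] (e : S) := {s : ℕ → S // ConvToInfty e s}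

/-- Two sequences converging to infinity are equivalent if their mutual Gromov
products tend to infinity. -/
def bequiv {S : Type*} [MetricSpace S] (e : S) (s t : BSeq S e) : Prop :=
  Filter.Tendsto (fun n => gprod e (s.1 n) (t.1 n)) Filter.atTop Filter.atTop

/-- The Gromov boundary of `S` with respect to the basepoint `e`. -/
def GBoundary (S : Type*) [MetricSpace S] (e : S) := Quot (bequiv (S := S) e)

/-- A sequence in `S` tends to the boundary point `x`. -/
def TendstoBd {S : Type*} [MetricSpace S] (e : S) (s : ℕ → S) (x : GBoundary S e) : Prop :=
  ∃ h : ConvToInfty e s, Quot.mk _ (⟨s, h⟩ : BSeq S e) = x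

/-- The Gromov product of a point `u ∈ S` with a boundary point `x`:
the infimum over sequences tending to `x` of the liminf of Gromov products. -/
noncomputable def gprodSB {S : Type*} [MetricSpace S] (e u : S) (x : GBoundary S e) : EReal :=
  sInf {r : EReal | ∃ s : ℕ → S, TendstoBd e s x ∧
    r = Filter.liminf (fun n => (gprod e u (s n) : EReal)) Filter.atTop}

/-- The Gromov product of two boundary points. -/
noncomputable def gprodBB {S : Type*} [MetricSpace S] (e : S) (x y : GBoundary S e) : EReal :=
  sInf {r : EReal | ∃ s t : ℕ → S, TendstoBd e s x ∧ TendstoBd e t y ∧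
    r = Filter.liminf (fun p : ℕ × ℕ => (gprod e (s p.1) (t p.2) : EReal)) Filter.atTop}

/-- `UK e K x = {s ∈ S | (x·s)_e > K}`. -/
def UK {S : Type*} [MetricSpace S] (e : S) (K : ℝ) (x : GBoundary S e) : Set S :=
  {u : S | (K : EReal) < gprodSB e u x}

/-- `d'(x,y) = exp (−ζ (x·y)_e)` on the boundary (equal to `0` when the product is `∞`). -/
noncomputable def dExp {S : Type*} [MetricSpace S] (e : S) (ζ : ℝ) (x y : GBoundary S e) : ℝ :=
  if gprodBB e x y = ⊤ then 0 else Real.exp (-ζ * (gprodBB e x y).toReal)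

/-- The chain metric `ρ(x,y) = inf Σ d'(s_k, s_{k+1})` over finite chains from `x` to `y`. -/
noncomputable def rhoChain {S : Type*} [MetricSpace S] (e : S) (ζ : ℝ)
    (x y : GBoundary S e) : ℝ :=
  sInf {r : ℝ | ∃ (n : ℕ) (c : ℕ → GBoundary S e), c 0 = x ∧ c n = y ∧
    r = ∑ k ∈ Finset.range n, dExp e ζ (c k) (c (k + 1))}

/-- `ρ` is a metric. -/
def IsMetricFn {B : Type*} (ρ : B → B → ℝ) : Prop :=
  (∀ x y, 0 ≤ ρ x y) ∧ (∀ x y, ρ x y = 0 ↔ x = y) ∧ (∀ x y, ρ x y = ρ y x) ∧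
  ∀ x y z, ρ x z ≤ ρ x y + ρ y z

/-- `ζ` is a suitable visual parameter: `ζ > 0`, the associated chain function `ρ` is a
metric on the boundary, and `d'/2 ≤ ρ ≤ d'`. -/
def VisualParam {S : Type*} [MetricSpace S] (e : S) (ζ : ℝ) : Prop :=
  0 < ζ ∧ IsMetricFn (rhoChain e ζ) ∧
  ∀ x y : GBoundary S e, dExp e ζ x y / 2 ≤ rhoChain e ζ x y ∧ rhoChain e ζ x y ≤ dExp e ζ x y

/-- The topology on the Gromov boundary induced by the visual metric `ρ`. -/
noncomputable def bdTopology (S : Type*) [MetricSpace S] (e : S) (ζ : ℝ) :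
    TopologicalSpace (GBoundary S e) :=
  TopologicalSpace.generateFrom
    {B | ∃ (x : GBoundary S e) (ε : ℝ), 0 < ε ∧ B = {y | rhoChain e ζ x y < ε}}

theorem gprod_comp_ge {S : Type*} [MetricSpace S] (e : S) {f : S → S} (hf : Isometry f)
    (a b : S) : gprod e a b - dist (f e) e ≤ gprod e (f a) (f b) := by
  have h1 : dist a e - dist (f e) e ≤ dist (f a) e := by
    have h := dist_triangle (f a) e (f e)
    rw [hf.dist_eq] at h
    have hc := dist_comm e (f e)
    linarith
  have h2 : dist b e - dist (f e) e ≤ dist (f b) e := by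
    have h := dist_triangle (f b) e (f e)
    rw [hf.dist_eq] at h
    have hc := dist_comm e (f e)
    linarith
  have h3 : dist (f a) (f b) = dist a b := hf.dist_eq a b
  simp only [gprod, h3]; linarith

theorem ConvToInfty.comp {S : Type*} [MetricSpace S] {e : S} {f : S → S} (hf : Isometry f)
    {s : ℕ → S} (hs : ConvToInfty e s) : ConvToInfty e (fun n => f (s n)) := by
  have h : Filter.Tendsto (fun p : ℕ × ℕ => gprod e (s p.1) (s p.2) + -dist (f e) e)
      Filter.atTop Filter.atTop := Filter.tendsto_atTop_add_const_right _ _ hs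
  refine Filter.tendsto_atTop_mono (fun p => ?_) h
  have := gprod_comp_ge e hf (s p.1) (s p.2)
  simpa [sub_eq_add_neg] using this

/-- The map induced on the Gromov boundary by an isometry of `S`. -/
def bdMap {S : Type*} [MetricSpace S] (e : S) (f : S → S) (hf : Isometry f) :
    GBoundary S e → GBoundary S e :=
  Quot.map (fun s : BSeq S e => (⟨fun n => f (s.1 n), s.2.comp hf⟩ : BSeq S e))
    (by
      intro s t h
      have h' : Filter.Tendsto (fun n => gprod e (s.1 n) (t.1 n) + -dist (f e) e)
          Filter.atTop Filter.atTop := Filter.tendsto_atTop_add_const_right _ _ h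
      refine Filter.tendsto_atTop_mono (fun n => ?_) h'
      have := gprod_comp_ge e hf (s.1 n) (t.1 n)
      simpa [sub_eq_add_neg] using this)

/-- The induced map on pairs. -/
def pairMap {M : Type*} (f : M → M) (p : M × M) : M × M := (f p.1, f p.2)

/-- Condition (C) for an action on a topological space. -/
def ConditionC {G M : Type*} [TopologicalSpace M] (act : G → M → M) : Prop :=
  ∀ u v : M × M, u.1 = u.2 → v.1 = v.2 → u ≠ v →
    ∃ U V : Set (M × M), IsOpen U ∧ IsOpen V ∧ u ∈ U ∧ v ∈ V ∧
      ∀ a b : M × M, a.1 ≠ a.2 → b.1 ≠ b.2 → a ≠ b →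
        ∃ A B : Set (M × M), IsOpen A ∧ IsOpen B ∧ a ∈ A ∧ b ∈ B ∧
          {g : G | (pairMap (act g) '' A ∩ U).Nonempty ∧
            (pairMap (act g) '' B ∩ V).Nonempty}.Finite

/-- Condition (C₁) for a pair of open sets `U, V`. -/
def CondC1 {G M : Type*} [TopologicalSpace M] (act : G → M → M) (U V : Set M) : Prop :=
  ∀ p q : M, p ≠ q →
    ∃ A B : Set M, IsOpen A ∧ IsOpen B ∧ p ∈ A ∧ q ∈ B ∧
      {g : G | (act g '' A ∩ U).Nonempty ∧ (act g '' A ∩ V).Nonempty ∧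
        (act g '' B ∩ U).Nonempty ∧ (act g '' B ∩ V).Nonempty}.Finite

/-- Condition (C₂) for a pair of open sets `U, V`. -/
def CondC2 {G M : Type*} [TopologicalSpace M] (act : G → M → M) (U V : Set M) : Prop :=
  ∀ p q r : M, p ≠ q → q ≠ r → p ≠ r →
    ∃ A B C : Set M, IsOpen A ∧ IsOpen B ∧ IsOpen C ∧ p ∈ A ∧ q ∈ B ∧ r ∈ C ∧
      {g : G | (act g '' A ∩ U).Nonempty ∧ (act g '' B ∩ V).Nonempty ∧
        (act g '' C ∩ U).Nonempty ∧ (act g '' C ∩ V).Nonempty}.Finite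

/-- Condition (C₃) for a pair of open sets `U, V`. -/
def CondC3 {G M : Type*} [TopologicalSpace M] (act : G → M → M) (U V : Set M) : Prop :=
  ∀ p q r s : M, p ≠ q → p ≠ r → p ≠ s → q ≠ r → q ≠ s → r ≠ s →
    ∃ A B C D : Set M, IsOpen A ∧ IsOpen B ∧ IsOpen C ∧ IsOpen D ∧
      p ∈ A ∧ q ∈ B ∧ r ∈ C ∧ s ∈ D ∧
      {g : G | (act g '' A ∩ U).Nonempty ∧ (act g '' B ∩ U).Nonempty ∧
        (act g '' C ∩ V).Nonempty ∧ (act g '' D ∩ V).Nonempty}.Finite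

/-- Two points `x, y` satisfy (C₁): some open sets `U ∋ x`, `V ∋ y` satisfy (C₁). -/
def PairC1 {G M : Type*} [TopologicalSpace M] (act : G → M → M) (x y : M) : Prop :=
  ∃ U V : Set M, IsOpen U ∧ IsOpen V ∧ x ∈ U ∧ y ∈ V ∧ CondC1 (G := G) act U V

/-- Two points `x, y` satisfy (C₂). -/
def PairC2 {G M : Type*} [TopologicalSpace M] (act : G → M → M) (x y : M) : Prop :=
  ∃ U V : Set M, IsOpen U ∧ IsOpen V ∧ x ∈ U ∧ y ∈ V ∧ CondC2 (G := G) act U V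

/-- Two points `x, y` satisfy (C₃). -/
def PairC3 {G M : Type*} [TopologicalSpace M] (act : G → M → M) (x y : M) : Prop :=
  ∃ U V : Set M, IsOpen U ∧ IsOpen V ∧ x ∈ U ∧ y ∈ V ∧ CondC3 (G := G) act U V

/-- `g` has north–south dynamics on `M` with fixed points `x ≠ y`. -/
def NorthSouthAt {G M : Type*} [Group G] [TopologicalSpace M] (act : G → M → M)
    (g : G) (x y : M) : Prop :=
  x ≠ y ∧ (∀ z : M, act g z = z ↔ z = x ∨ z = y) ∧
  ∀ U V : Set M, IsOpen U → IsOpen V → x ∈ U → y ∈ V →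
    ∃ N : ℕ, ∀ n : ℕ, N < n → act (g ^ n) '' Uᶜ ⊆ V

/-- `g` has north–south dynamics on `M`. -/
def NorthSouth {G M : Type*} [Group G] [TopologicalSpace M] (act : G → M → M) (g : G) : Prop :=
  ∃ x y : M, NorthSouthAt act g x y

/-- A completely Hausdorff space: distinct points are separated by open sets with
disjoint closures. -/
def CompletelyHausdorff (M : Type*) [TopologicalSpace M] : Prop :=
  ∀ u v : M, u ≠ v → ∃ U V : Set M, IsOpen U ∧ IsOpen V ∧ u ∈ U ∧ v ∈ V ∧
    closure U ∩ closure V = ∅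

/-! ### The four-point inequality -/

theorem gprod_nonneg {S : Type*} [MetricSpace S] (e a b : S) : 0 ≤ gprod e a b := by
  have := dist_triangle_right a b e
  unfold gprod
  linarith

theorem gprod_comm {S : Type*} [MetricSpace S] (e a b : S) : gprod e a b = gprod e b a := by
  unfold gprod
  rw [dist_comm a b]
  ring

theorem IsGeodesicSegment.symm {S : Type*} [MetricSpace S] {Γ : Set S} {u v : S}
    (h : IsGeodesicSegment Γ u v) : IsGeodesicSegment Γ v u := by
  obtain ⟨γ, h0, h1, hd, rfl⟩ := h
  refine ⟨fun t => γ (dist u v - t), ?_, ?_, ?_, ?_⟩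
  · simpa using h1
  · simpa [dist_comm v u] using h0
  · intro s hs t ht
    rw [dist_comm v u] at hs ht
    rw [hd _ ⟨by linarith [hs.2], by linarith [hs.1]⟩ _ ⟨by linarith [ht.2], by linarith [ht.1]⟩,
      abs_sub_comm]
    congr 1
    ring
  · rw [dist_comm v u]
    ext z
    constructor
    · rintro ⟨t, ht, rfl⟩
      exact ⟨dist u v - t, ⟨by linarith [ht.2], by linarith [ht.1]⟩, by simp⟩
    · rintro ⟨t, ht, rfl⟩
      exact ⟨dist u v - t, ⟨by linarith [ht.2], by linarith [ht.1]⟩, rfl⟩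

theorem IsGeodesicSegment.left_mem {S : Type*} [MetricSpace S] {Γ : Set S} {u v : S}
    (h : IsGeodesicSegment Γ u v) : u ∈ Γ := by
  obtain ⟨γ, h0, h1, hd, rfl⟩ := h
  exact ⟨0, ⟨le_rfl, dist_nonneg⟩, h0⟩

theorem IsGeodesicSegment.dist_add {S : Type*} [MetricSpace S] {Γ : Set S} {u v p : S}
    (h : IsGeodesicSegment Γ u v) (hp : p ∈ Γ) : dist u p + dist p v = dist u v := by
  obtain ⟨γ, h0, h1, hd, rfl⟩ := h
  obtain ⟨t, ht, rfl⟩ := hp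
  have e1 := hd 0 ⟨le_rfl, dist_nonneg⟩ t ht
  have e2 := hd t ht _ ⟨dist_nonneg, le_rfl⟩
  rw [h0, zero_sub, abs_neg, abs_of_nonneg ht.1] at e1
  rw [h1, abs_sub_comm, abs_of_nonneg (by linarith [ht.2])] at e2
  linarith

theorem IsGeodesicSegment.isPreconnected {S : Type*} [MetricSpace S] {Γ : Set S} {u v : S}
    (h : IsGeodesicSegment Γ u v) : IsPreconnected Γ := by
  obtain ⟨γ, h0, h1, hd, rfl⟩ := h
  refine isPreconnected_Icc.image γ ?_
  have : LipschitzOnWith 1 γ (Set.Icc 0 (dist u v)) :=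
    LipschitzOnWith.of_dist_le_mul fun s hs t ht => by
      rw [hd s hs t ht, Real.dist_eq]
      simp
  exact this.continuousOn

/-- The Gromov product is a lower bound for the distance from `e` to a geodesic. -/
theorem gprod_le_dist {S : Type*} [MetricSpace S] {Γ : Set S} {e u v p : S}
    (h : IsGeodesicSegment Γ u v) (hp : p ∈ Γ) : gprod e u v ≤ dist e p := by
  have h1 := h.dist_add hp
  have h2 := dist_triangle u p e
  have h3 := dist_triangle v p e
  rw [dist_comm v p] at h3
  rw [dist_comm p e] at h2 h3
  unfold gprod
  linarith

/-- Slimness, with the infimum in `infDist` replaced by an actual point at the cost of `1`. -/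
theorem exists_near {S : Type*} [MetricSpace S] {δ : ℝ} (hhyp : DeltaHyperbolic S δ)
    {x y z : S} {Γ₁ Γ₂ Γ₃ : Set S} (h₁ : IsGeodesicSegment Γ₁ x y)
    (h₂ : IsGeodesicSegment Γ₂ y z) (h₃ : IsGeodesicSegment Γ₃ z x) {p : S} (hp : p ∈ Γ₁) :
    ∃ w ∈ Γ₂ ∪ Γ₃, dist p w < δ + 1 :=
  (Metric.infDist_lt_iff ⟨y, Or.inl h₂.left_mem⟩).1
    (lt_of_le_of_lt (hhyp x y z _ _ _ h₁ h₂ h₃ p hp) (by linarith))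

/-- Up to an additive constant, the Gromov product bounds the distance from `e` to a geodesic
from above. The geodesic is connected and covered by the closed neighbourhoods of the two other
sides of the triangle, so one of its points is close to both of them. -/
theorem exists_dist_le_gprod {S : Type*} [MetricSpace S] {δ : ℝ} (hgeo : GeodesicSpace S)
    (hhyp : DeltaHyperbolic S δ) {Γ : Set S} {e x y : S} (h : IsGeodesicSegment Γ x y) :
    ∃ p ∈ Γ, dist e p ≤ gprod e x y + 2 * (δ + 2) := by
  obtain ⟨Γ₂, h₂⟩ := hgeo y e
  obtain ⟨Γ₃, h₃⟩ := hgeo e x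
  have hclosed : ∀ T : Set S, IsClosed {p : S | Metric.infDist p T ≤ δ + 1} := fun T =>
    isClosed_le (Metric.continuous_infDist_pt T) continuous_const
  have key := (isPreconnected_closed_iff.1 h.isPreconnected) _ _ (hclosed Γ₂) (hclosed Γ₃)
    (fun p hp => by
      obtain ⟨w, hw, hd⟩ := exists_near hhyp h h₂ h₃ hp
      rcases hw with hw | hw
      · exact Or.inl ((Metric.infDist_le_dist_of_mem hw).trans hd.le)
      · exact Or.inr ((Metric.infDist_le_dist_of_mem hw).trans hd.le))
  have hδ : 0 ≤ δ :=
    Metric.infDist_nonneg.trans (hhyp x y e _ _ _ h h₂ h₃ x h.left_mem)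
  obtain ⟨p, hp, hp₂, hp₃⟩ := key
    ⟨y, h.symm.left_mem, by
      have := Metric.infDist_zero_of_mem h₂.left_mem
      simp only [Set.mem_ofPred_eq, this]
      linarith⟩
    ⟨x, h.left_mem, by
      have := Metric.infDist_zero_of_mem h₃.symm.left_mem
      simp only [Set.mem_ofPred_eq, this]
      linarith⟩
  refine ⟨p, hp, ?_⟩
  obtain ⟨r, hr, hpr⟩ := (Metric.infDist_lt_iff ⟨y, h₂.left_mem⟩).1
    (lt_of_le_of_lt hp₂ (by linarith : δ + 1 < δ + 2))
  obtain ⟨q, hq, hpq⟩ := (Metric.infDist_lt_iff ⟨e, h₃.left_mem⟩).1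
    (lt_of_le_of_lt hp₃ (by linarith : δ + 1 < δ + 2))
  have a1 := h₂.dist_add hr
  have a2 := h₃.dist_add hq
  have a3 := h.dist_add hp
  have b2 := dist_triangle e r p
  have b3 := dist_triangle e q p
  have b4 := dist_triangle p q x
  have b5 := dist_triangle p r y
  have c1 := dist_comm r p
  have c2 := dist_comm q p
  have c3 := dist_comm r y
  have c4 := dist_comm r e
  have c5 := dist_comm x p
  have c6 := dist_comm x e
  unfold gprod
  linarith

/-- The four-point inequality, with the minimum written as a disjunction. -/
theorem four_point {S : Type*} [MetricSpace S] {δ : ℝ} (hgeo : GeodesicSpace S)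
    (hhyp : DeltaHyperbolic S δ) (e x y z : S) :
    gprod e x z ≤ gprod e x y + (3 * δ + 5) ∨ gprod e z y ≤ gprod e x y + (3 * δ + 5) := by
  obtain ⟨Γ₁, h₁⟩ := hgeo x y
  obtain ⟨Γ₂, h₂⟩ := hgeo y z
  obtain ⟨Γ₃, h₃⟩ := hgeo z x
  obtain ⟨p, hp, hep⟩ := exists_dist_le_gprod hgeo hhyp (e := e) h₁
  obtain ⟨w, hw, hpw⟩ := exists_near hhyp h₁ h₂ h₃ hp
  have ht := dist_triangle e p w
  rcases hw with hw | hw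
  · right
    have := gprod_le_dist (e := e) h₂.symm hw
    linarith
  · left
    have := gprod_le_dist (e := e) h₃.symm hw
    linarith

/-! ### Gromov products along sequences tending to the boundary -/

theorem bequiv_equivalence {S : Type*} [MetricSpace S] {δ : ℝ} (hgeo : GeodesicSpace S)
    (hhyp : DeltaHyperbolic S δ) (e : S) : Equivalence (bequiv (S := S) e) := by
  refine ⟨fun s => ?_, fun {s t} h => ?_, fun {s t u} h₁ h₂ => ?_⟩
  · have h : Filter.Tendsto (fun p : ℕ × ℕ => gprod e (s.1 p.1) (s.1 p.2))
        Filter.atTop Filter.atTop := s.2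
    exact h.comp Filter.tendsto_atTop_diagonal
  · exact Filter.Tendsto.congr (fun n => gprod_comm e (s.1 n) (t.1 n)) h
  · refine Filter.tendsto_atTop.2 fun b => ?_
    filter_upwards [Filter.tendsto_atTop.1 h₁ (b + (3 * δ + 5)),
      Filter.tendsto_atTop.1 h₂ (b + (3 * δ + 5))] with n a1 a2
    rcases four_point hgeo hhyp e (s.1 n) (u.1 n) (t.1 n) with h | h <;> linarith

/-- Sequences tending to the same boundary point have large products, also for unrelated
indices. -/
theorem exists_gprod_gt {S : Type*} [MetricSpace S] {δ : ℝ} (hgeo : GeodesicSpace S)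
    (hhyp : DeltaHyperbolic S δ) {e : S} {x : GBoundary S e} {s s' : ℕ → S}
    (hs : TendstoBd e s x) (hs' : TendstoBd e s' x) (K : ℝ) :
    ∃ N : ℕ, ∀ n ≥ N, ∀ i ≥ N, K < gprod e (s n) (s' i) := by
  obtain ⟨h, rfl⟩ := hs
  obtain ⟨h', he⟩ := hs'
  have hb : bequiv e ⟨s', h'⟩ ⟨s, h⟩ :=
    (bequiv_equivalence hgeo hhyp e).eqvGen_iff.1 (Quot.eqvGen_exact he)
  have hb := (bequiv_equivalence hgeo hhyp e).symm hb
  have e1 := (Filter.tendsto_atTop.1 h) (K + (3 * δ + 6))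
  have e2 := (Filter.tendsto_atTop.1 hb) (K + (3 * δ + 6))
  obtain ⟨⟨a, b⟩, hab⟩ := Filter.eventually_atTop.1 e1
  obtain ⟨c, hc⟩ := Filter.eventually_atTop.1 e2
  refine ⟨max (max a b) c, fun n hn i hi => ?_⟩
  have f1 := hab (n, i) ⟨by simp at hn ⊢; omega, by simp at hi ⊢; omega⟩
  have f2 := hc i (by simp at hi ⊢; omega)
  simp only at f1 f2
  rcases four_point hgeo hhyp e (s n) (s' i) (s i) with h | h <;> linarith

theorem eventually_gprod_gt {S : Type*} [MetricSpace S] {e : S} {x y : GBoundary S e}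
    {M : ℝ} (hM : (M : EReal) < gprodBB e x y) {s t : ℕ → S}
    (hs : TendstoBd e s x) (ht : TendstoBd e t y) :
    ∀ᶠ n in Filter.atTop, M < gprod e (s n) (t n) := by
  have h1 : (M : EReal) < Filter.liminf
      (fun p : ℕ × ℕ => (gprod e (s p.1) (t p.2) : EReal)) Filter.atTop :=
    hM.trans_le (sInf_le ⟨s, t, hs, ht, rfl⟩)
  have h2 := Filter.eventually_lt_of_lt_liminf h1
  have hd : Filter.Tendsto (fun n : ℕ => (n, n)) Filter.atTop Filter.atTop :=
    Filter.tendsto_atTop_diagonal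
  filter_upwards [hd.eventually h2] with n hn
  exact_mod_cast hn

theorem eventually_gprod_lt {S : Type*} [MetricSpace S] {δ : ℝ} (hgeo : GeodesicSpace S)
    (hhyp : DeltaHyperbolic S δ) {e : S} {x y : GBoundary S e}
    {C : ℝ} (hC : gprodBB e x y < (C : EReal)) {s t : ℕ → S}
    (hs : TendstoBd e s x) (ht : TendstoBd e t y) :
    ∀ᶠ n in Filter.atTop, gprod e (s n) (t n) < C + 2 * (3 * δ + 5) := by
  obtain ⟨r, ⟨s', t', hs', ht', rfl⟩, hr⟩ := sInf_lt_iff.1 hC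
  have hf := Filter.frequently_lt_of_liminf_lt (by isBoundedDefault) hr
  obtain ⟨N₁, hN₁⟩ := exists_gprod_gt hgeo hhyp hs' hs
    (max (C + (3 * δ + 5)) (C + 2 * (3 * δ + 5)))
  obtain ⟨N₂, hN₂⟩ := exists_gprod_gt hgeo hhyp ht ht'
    (max (C + (3 * δ + 5)) (C + 2 * (3 * δ + 5)))
  obtain ⟨⟨i, j⟩, ⟨hi, hj⟩, hij⟩ := Filter.frequently_atTop.1 hf (N₁, N₂)
  simp only [EReal.coe_lt_coe_iff] at hi hj hij
  filter_upwards [Filter.eventually_ge_atTop N₁, Filter.eventually_ge_atTop N₂] with n h1 h2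
  have a1 := max_lt_iff.1 (hN₁ i hi n h1)
  have a2 := max_lt_iff.1 (hN₂ n h2 j hj)
  -- Interpolate `s' i, s n, t n, t' j`, using the four-point inequality twice.
  rcases four_point hgeo hhyp e (s' i) (t' j) (s n) with h | h
  · linarith [a1.1]
  · rcases four_point hgeo hhyp e (s n) (t' j) (t n) with h' | h'
    · linarith
    · linarith [a2.2]

/-! ### From the visual metric to Gromov products -/

theorem gprodBB_nonneg {S : Type*} [MetricSpace S] (e : S) (x y : GBoundary S e) :
    0 ≤ gprodBB e x y := by
  refine le_sInf ?_
  rintro r ⟨s, t, -, -, rfl⟩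
  refine Filter.le_liminf_of_le (by isBoundedDefault) (Filter.Eventually.of_forall fun p => ?_)
  exact_mod_cast gprod_nonneg e _ _

theorem gprodBB_lt_of_dExp {S : Type*} [MetricSpace S] {e : S} {ζ : ℝ} (hζ : 0 < ζ) {r : ℝ}
    (hr : 0 < r) : ∃ C : ℝ, ∀ x y : GBoundary S e, r ≤ dExp e ζ x y →
      gprodBB e x y < (C : EReal) := by
  refine ⟨-Real.log r / ζ + 1, fun x y h => ?_⟩
  unfold dExp at h
  split_ifs at h with ht
  · linarith
  · have hbot : gprodBB e x y ≠ ⊥ := fun hb => by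
      have := gprodBB_nonneg e x y
      rw [hb] at this
      simp at this
    rw [← EReal.coe_toReal ht hbot, EReal.coe_lt_coe_iff]
    have := (Real.log_le_iff_le_exp hr).2 h
    have h2 : (gprodBB e x y).toReal ≤ -Real.log r / ζ := by
      rw [le_div_iff₀ hζ]
      linarith
    linarith

theorem lt_gprodBB_of_dExp {S : Type*} [MetricSpace S] {e : S} {ζ : ℝ} (hζ : 0 < ζ) {M : ℝ}
    {x y : GBoundary S e} (h : dExp e ζ x y < Real.exp (-ζ * M)) :
    (M : EReal) < gprodBB e x y := by
  unfold dExp at h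
  split_ifs at h with ht
  · rw [ht]
    exact EReal.coe_lt_top M
  · have hbot : gprodBB e x y ≠ ⊥ := fun hb => by
      have := gprodBB_nonneg e x y
      rw [hb] at this
      simp at this
    rw [← EReal.coe_toReal ht hbot, EReal.coe_lt_coe_iff]
    have := Real.exp_lt_exp.1 h
    nlinarith

/-- Products between two separated balls of the visual metric are uniformly bounded. -/
theorem gprodBB_lt_of_mem_balls {S : Type*} [MetricSpace S] {e : S} {ζ : ℝ}
    (hζ : VisualParam e ζ) {x y : GBoundary S e} (hxy : x ≠ y) :
    ∃ r > 0, ∃ C : ℝ, ∀ u v : GBoundary S e, rhoChain e ζ x u < r → rhoChain e ζ y v < r →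
      gprodBB e u v < (C : EReal) := by
  obtain ⟨hpos, ⟨h0, heq, hsymm, htri⟩, hcomp⟩ := hζ
  have hρ : 0 < rhoChain e ζ x y :=
    lt_of_le_of_ne (h0 x y) fun h => hxy ((heq x y).1 h.symm)
  obtain ⟨C, hC⟩ := gprodBB_lt_of_dExp (e := e) hpos
    (show 0 < rhoChain e ζ x y / 3 by positivity)
  refine ⟨_, show 0 < rhoChain e ζ x y / 3 by positivity, C, fun u v hu hv => hC u v ?_⟩
  have h1 := htri x u y
  have h2 := htri u v y
  have h3 := hsymm v y
  have h4 := (hcomp u v).2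
  linarith

/-- The invariance of cross ratios turned into an inequality. -/
theorem gprod_cross_le {S : Type*} [MetricSpace S] (e : S) {f : S → S} (hf : Isometry f)
    (a a' b b' : S) :
    gprod e a a' + gprod e b b' ≤
      gprod e a b + gprod e a' b' + gprod e (f a) (f a') + gprod e (f b) (f b') := by
  have h1 := gprod_nonneg e (f a) (f b)
  have h2 := gprod_nonneg e (f a') (f b')
  simp only [gprod, hf.dist_eq] at *
  linarith

theorem isOpen_rhoBall {S : Type*} [MetricSpace S] (e : S) (ζ : ℝ) (x : GBoundary S e) {r : ℝ}
    (hr : 0 < r) : @IsOpen _ (bdTopology S e ζ) {y | rhoChain e ζ x y < r} :=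
  TopologicalSpace.isOpen_generateFrom_of_mem ⟨x, r, hr, rfl⟩

theorem exists_tendstoBd {S : Type*} [MetricSpace S] {e : S} (a : GBoundary S e) :
    ∃ s : ℕ → S, TendstoBd e s a ∧
      ∀ (f : S → S) (hf : Isometry f), TendstoBd e (fun n => f (s n)) (bdMap e f hf a) := by
  obtain ⟨s, rfl⟩ := Quot.exists_rep a
  exact ⟨s.1, ⟨s.2, rfl⟩, fun f hf => ⟨s.2.comp hf, rfl⟩⟩

/-- For an isometric action of `G` on a geodesic `δ`-hyperbolic space,
every pair of distinct boundary points satisfies condition (C₁) for the induced action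
on the Gromov boundary. -/
theorem statement11 {G S : Type*} [Group G] [MetricSpace S] (δ : ℝ) (hδ : 0 ≤ δ)
    (hgeo : GeodesicSpace S) (hhyp : DeltaHyperbolic S δ)
    {act : G → S → S} (hact : IsIsometricAction act)
    (e : S) (ζ : ℝ) (hζ : VisualParam e ζ)
    (x y : GBoundary S e) (hxy : x ≠ y) :
    @PairC1 G (GBoundary S e) (bdTopology S e ζ)
      (fun g => bdMap e (act g) (hact.2 g)) x y := by
  obtain ⟨r₁, hr₁, C', hC'⟩ := gprodBB_lt_of_mem_balls hζ hxy
  obtain ⟨hpos, ⟨h0, heq, hsymm, htri⟩, hcomp⟩ := id hζ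
  have self : ∀ z : GBoundary S e, rhoChain e ζ z z = 0 := fun z => (heq z z).2 rfl
  refine ⟨_, _, isOpen_rhoBall e ζ x hr₁, isOpen_rhoBall e ζ y hr₁,
    by simpa [self] using hr₁, by simpa [self] using hr₁, ?_⟩
  intro p q hpq
  obtain ⟨r₂, hr₂, C, hC⟩ := gprodBB_lt_of_mem_balls hζ hpq
  -- Any value at least `C + C' + 4 * (3 * δ + 5)` contradicts `gprod_cross_le` below.
  set M : ℝ := C + C' + 4 * (3 * δ + 5) with hM
  have hr : 0 < min r₂ (Real.exp (-ζ * M) / 4) := lt_min hr₂ (by positivity)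
  have close : ∀ z a a' : GBoundary S e, rhoChain e ζ z a < min r₂ (Real.exp (-ζ * M) / 4) →
      rhoChain e ζ z a' < min r₂ (Real.exp (-ζ * M) / 4) → (M : EReal) < gprodBB e a a' := by
    intro z a a' ha ha'
    refine lt_gprodBB_of_dExp hpos ?_
    have h1 := (hcomp a a').1
    have h2 := htri a z a'
    have h3 := hsymm a z
    have h4 := (lt_min_iff.1 ha).2
    have h5 := (lt_min_iff.1 ha').2
    linarith
  refine ⟨_, _, isOpen_rhoBall e ζ p hr, isOpen_rhoBall e ζ q hr,
    by simpa only [Set.mem_ofPred_eq, self] using hr,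
    by simpa only [Set.mem_ofPred_eq, self] using hr, ?_⟩
  convert Set.finite_empty
  rw [Set.eq_empty_iff_forall_notMem]
  rintro g ⟨⟨_, ⟨a, ha, rfl⟩, hga⟩, ⟨_, ⟨a', ha', rfl⟩, hga'⟩, ⟨_, ⟨b, hb, rfl⟩, hgb⟩,
    ⟨_, ⟨b', hb', rfl⟩, hgb'⟩⟩
  simp only [Set.mem_ofPred_eq] at ha ha' hb hb' hga hga' hgb hgb'
  obtain ⟨s, hs, hgs⟩ := exists_tendstoBd a
  obtain ⟨s', hs', hgs'⟩ := exists_tendstoBd a'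
  obtain ⟨t, ht, hgt⟩ := exists_tendstoBd b
  obtain ⟨t', ht', hgt'⟩ := exists_tendstoBd b'
  have hf := hact.2 g
  obtain ⟨n, i1, i2, i3, i4, i5, i6⟩ := ((eventually_gprod_gt (close p a a' ha ha') hs hs').and <|
    (eventually_gprod_gt (close q b b' hb hb') ht ht').and <|
    (eventually_gprod_lt hgeo hhyp
      (hC a b (lt_min_iff.1 ha).1 (lt_min_iff.1 hb).1) hs ht).and <|
    (eventually_gprod_lt hgeo hhyp
      (hC a' b' (lt_min_iff.1 ha').1 (lt_min_iff.1 hb').1) hs' ht').and <|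
    (eventually_gprod_lt hgeo hhyp (hC' _ _ hga hga') (hgs _ hf) (hgs' _ hf)).and
    (eventually_gprod_lt hgeo hhyp (hC' _ _ hgb hgb') (hgt _ hf) (hgt' _ hf))).exists
  have := gprod_cross_le e hf (s n) (s' n) (t n) (t' n)
  linarith
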